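/- arXiv:0905.3834 — 2 statements merged into one kernel-verified Lean document; each statement's English description precedes it below -/
import Mathlib

section
/- Let U : [0,∞) → ℝ be C² and solve (1−ρ²)U''(ρ) + (2/ρ − 4ρ)U'(ρ) − 2U(ρ) + U(ρ)³ = 0 for all ρ > 0. Then U(1) ∈ {−√2, 0, √2}. In particular, every nonconstant self-similar profile that is regular on the closed past light cone 0 ≤ ρ ≤ 1 has a singularity at some finite ρ > 1 and cannot be globally smooth on [0,∞). -/
/-!
Write `n(U) = U³ - 2U` and `b = U 1`, and let `V = U'`. By the symmetry `U ↦ -U` it suffices to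
exclude `√2 < b` and `0 < b < √2`. The main tool is the substitution `f = ρU`, which turns the
equation into `((1-ρ²)f')' = -f³/ρ²`; equivalently `(ρ²(1-ρ²)U')' = -ρ²n(U)`.

* `no_global_exterior` (`√2 < b`). For `√2 < m < b` and `B = (m²+2)/(m²-2) > 1` the function
  `φ(ρ) = m(Bρ-1)/(B-ρ)` is a subsolution, `((ρ²-1)φ')' ≤ φ³/ρ²`, with `φ(1) = m < b`. Both
  `(ρ²-1)f'` and `(ρ²-1)φ'` vanish at `ρ = 1`, so `f - φ` stays positive on `[1,B)`, whereas
  `φ → ∞` at `B`.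

* `no_regular_interior` (`0 < b < √2`). Since `U'(1) = b(b²-2)/2 < 0`, one follows `U` inwards
  on the largest interval `(r,1]` on which `U' < 0`; then `ρ²(1-ρ²)U'` vanishes at `r` and at `1`,
  which forces `U` to cross `√2` at some `c ∈ (r,1)`. With `h = 1 - 2/U²` the equation becomes
  `(ρ²(1-ρ²)h')' + 4ρ²h = -12ρ²(1-ρ²)U'²/U⁴`; comparing with the solution `3ρ - 1/ρ` of the
  linear homogeneous equation gives `c² ≤ 1/3` (`crossing_le`). As `f` is increasing,
  `ρ²U² ≤ 2c² ≤ 2/3` on `(r,c]`, and under this bound the curve `U' = -ρ(1+3ρ²)n(U)/2` is a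
  barrier: `U' < -ρ(1+3ρ²)n(U)/2` on `(r,c]` (`barrier`). This contradicts `U'(r) = 0` if
  `0 < r`. If `r = 0` it contradicts the behaviour `U' ≈ -ρn(U)/3` of a solution regular at
  the origin.
-/

lemma hasDerivAt_of_eq {f g : ℝ → ℝ} {f' g' x : ℝ} (h : HasDerivAt f f' x)
    (hg : ∀ y, g y = f y) (hg' : g' = f') : HasDerivAt g g' x := by
  rw [hg', funext hg]; exact h

/-- Positive derivative on the open interval gives strict increase between the endpoints. -/
lemma lt_of_hasDerivAt_pos {g g' : ℝ → ℝ} {a b : ℝ} (hab : a < b)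
    (hc : ContinuousOn g (Set.Icc a b))
    (hd : ∀ x ∈ Set.Ioo a b, HasDerivAt g (g' x) x)
    (hp : ∀ x ∈ Set.Ioo a b, 0 < g' x) : g a < g b := by
  obtain ⟨x, hx, h⟩ := exists_hasDerivAt_eq_slope g g' hab hc hd
  have h1 := hp x hx
  rw [h] at h1
  have h2 := (div_pos_iff_of_pos_right (sub_pos.2 hab)).1 h1
  linarith

lemma le_of_hasDerivAt_nonneg {g g' : ℝ → ℝ} {a b : ℝ} (hab : a < b)
    (hc : ContinuousOn g (Set.Icc a b))
    (hd : ∀ x ∈ Set.Ioo a b, HasDerivAt g (g' x) x)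
    (hp : ∀ x ∈ Set.Ioo a b, 0 ≤ g' x) : g a ≤ g b := by
  obtain ⟨x, hx, h⟩ := exists_hasDerivAt_eq_slope g g' hab hc hd
  have h1 := hp x hx
  rw [h] at h1
  by_contra! h3
  have := div_neg_of_neg_of_pos (sub_neg.2 h3) (sub_pos.2 hab)
  linarith

/-- The last point of `[a,b]` at which a continuous function, negative at `b`, is nonnegative. -/
lemma exists_last_zero {g : ℝ → ℝ} {a b : ℝ} (hc : ContinuousOn g (Set.Icc a b))
    (hb : g b < 0) (hex : ∃ x ∈ Set.Icc a b, 0 ≤ g x) :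
    ∃ r, a ≤ r ∧ r < b ∧ g r = 0 ∧ ∀ x, r < x → x ≤ b → g x < 0 := by
  set S : Set ℝ := Set.Icc a b ∩ g ⁻¹' Set.Ici 0 with hS
  have hScl : IsClosed S := hc.preimage_isClosed_of_isClosed isClosed_Icc isClosed_Ici
  have hScomp : IsCompact S := isCompact_Icc.of_isClosed_subset hScl Set.inter_subset_left
  have hne : S.Nonempty := by
    obtain ⟨x, hx, h⟩ := hex
    exact ⟨x, hx, h⟩
  obtain ⟨r, hr, hmax⟩ := hScomp.exists_isGreatest hne
  have hr0 : 0 ≤ g r := hr.2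
  have hra : a ≤ r := hr.1.1
  have hrb : r < b := by
    rcases lt_or_eq_of_le hr.1.2 with h | h
    · exact h
    · rw [h] at hr0; linarith
  have hneg : ∀ x, r < x → x ≤ b → g x < 0 := by
    intro x hx hxb
    by_contra! h
    have := hmax (show x ∈ S from ⟨⟨by linarith, hxb⟩, h⟩)
    linarith
  refine ⟨r, hra, hrb, ?_, hneg⟩
  obtain ⟨x, hx, hx0⟩ : (0 : ℝ) ∈ g '' Set.Icc r b :=
    intermediate_value_Icc' hrb.le (hc.mono (Set.Icc_subset_Icc_left hra)) ⟨hb.le, hr0⟩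
  rcases lt_or_eq_of_le hx.1 with h | h
  · have := hneg x h hx.2
    linarith
  · rw [h]; exact hx0

/-- Continuous induction: positivity propagates along `[a,b]`. -/
lemma pos_of_propagates {g : ℝ → ℝ} {a b : ℝ} (hc : ContinuousOn g (Set.Icc a b))
    (ha : 0 < g a)
    (hstep : ∀ r, a < r → r ≤ b → (∀ x, a ≤ x → x < r → 0 < g x) → 0 < g r) :
    ∀ x ∈ Set.Icc a b, 0 < g x := by
  by_contra! hex
  set S : Set ℝ := Set.Icc a b ∩ g ⁻¹' Set.Iic 0 with hS
  have hScl : IsClosed S := hc.preimage_isClosed_of_isClosed isClosed_Icc isClosed_Iic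
  have hScomp : IsCompact S := isCompact_Icc.of_isClosed_subset hScl Set.inter_subset_left
  have hne : S.Nonempty := by
    obtain ⟨x, hx, h⟩ := hex
    exact ⟨x, hx, h⟩
  obtain ⟨r, hr, hmin⟩ := hScomp.exists_isLeast hne
  have hr0 : g r ≤ 0 := hr.2
  have hra : a < r := by
    rcases lt_or_eq_of_le hr.1.1 with h | h
    · exact h
    · rw [← h] at hr0; linarith
  have := hstep r hra hr.1.2 (fun x hx hxr => by
    by_contra! h
    have := hmin (show x ∈ S from ⟨⟨hx, by linarith [hr.1.2]⟩, h⟩)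
    linarith)
  linarith

/-- A solution of the profile equation on `ρ > 0` (with the equation multiplied by `ρ`), whose
derivative `V` is continuous up to `ρ = 0`; `A` stands for the second derivative. -/
structure IsProfile (U V A : ℝ → ℝ) : Prop where
  contU : ContinuousOn U (Set.Ici 0)
  contV : ContinuousOn V (Set.Ici 0)
  derU : ∀ x, 0 < x → HasDerivAt U (V x) x
  derV : ∀ x, 0 < x → HasDerivAt V (A x) x
  ode : ∀ x, 0 < x →
    x * (1 - x ^ 2) * A x + (2 - 4 * x ^ 2) * V x - 2 * x * U x + x * U x ^ 3 = 0

lemma IsProfile.neg {U V A : ℝ → ℝ} (h : IsProfile U V A) :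
    IsProfile (fun x => -U x) (fun x => -V x) (fun x => -A x) where
  contU := h.contU.neg
  contV := h.contV.neg
  derU x hx := (h.derU x hx).neg
  derV x hx := (h.derV x hx).neg
  ode x hx := by linear_combination -h.ode x hx

lemma isProfile_of_contDiffOn {U : ℝ → ℝ} (hU : ContDiffOn ℝ 2 U (Set.Ici 0))
    (heq : ∀ ρ : ℝ, 0 < ρ →
      (1 - ρ ^ 2) * deriv (deriv U) ρ + (2 / ρ - 4 * ρ) * deriv U ρ
        - 2 * U ρ + (U ρ) ^ 3 = 0) :
    IsProfile U (derivWithin U (Set.Ici 0)) (deriv (deriv U)) := by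
  have hV : ∀ x, 0 < x → derivWithin U (Set.Ici 0) x = deriv U x := fun x hx =>
    derivWithin_of_mem_nhds (Ici_mem_nhds hx)
  have hVe : ∀ x, 0 < x → derivWithin U (Set.Ici 0) =ᶠ[nhds x] deriv U := fun x hx => by
    filter_upwards [Ioi_mem_nhds hx] with y hy using hV y hy
  have hW : ContDiffOn ℝ 1 (derivWithin U (Set.Ici 0)) (Set.Ici 0) :=
    hU.derivWithin (uniqueDiffOn_Ici 0) (by norm_num)
  refine ⟨hU.continuousOn, hW.continuousOn, fun x hx => ?_, fun x hx => ?_, fun x hx => ?_⟩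
  · rw [hV x hx]
    exact ((hU.differentiableOn (by norm_num) x hx.le).differentiableAt
      (Ici_mem_nhds hx)).hasDerivAt
  · have h1 := ((hW.differentiableOn (by norm_num) x hx.le).differentiableAt
      (Ici_mem_nhds hx)).hasDerivAt
    rw [(hVe x hx).deriv_eq] at h1
    exact h1
  · have h := heq x hx
    rw [hV x hx]
    field_simp at h
    linear_combination h

/-! ### Outside the light cone -/

lemma no_global_exterior {U V A : ℝ → ℝ} (h : IsProfile U V A) (hb : √2 < U 1) : False := by
  obtain ⟨m, hm1, hm2⟩ := exists_between hb
  have hm0 : 0 < m := lt_of_le_of_lt (Real.sqrt_nonneg 2) hm1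
  have hmm : 2 < m ^ 2 := by
    have := Real.sq_sqrt (show (0:ℝ) ≤ 2 by norm_num)
    nlinarith [Real.sqrt_nonneg 2]
  -- the pole of the subsolution `φ`, determined by `m² (B - 1) = 2 (B + 1)`
  obtain ⟨B, hB⟩ : ∃ B, B = (m ^ 2 + 2) / (m ^ 2 - 2) := ⟨_, rfl⟩
  have hBm : m ^ 2 * (B - 1) = 2 * (B + 1) := by
    have : m ^ 2 - 2 ≠ 0 := by linarith
    rw [hB]; field_simp; ring
  have hB1 : 1 < B := by
    rw [hB, lt_div_iff₀ (by linarith)]; linarith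
  -- the difference of `f = ρU` and the subsolution, its derivative, and the derivative of
  -- `(ρ² - 1) k'`
  obtain ⟨k, hk⟩ : ∃ k : ℝ → ℝ, k = fun x => x * U x - m * (B * x - 1) / (B - x) := ⟨_, rfl⟩
  obtain ⟨K, hK⟩ : ∃ K : ℝ → ℝ, K = fun x =>
    (x ^ 2 - 1) * (U x + x * V x - m * (B ^ 2 - 1) / (B - x) ^ 2) := ⟨_, rfl⟩
  have dk : ∀ x, 0 < x → x < B →
      HasDerivAt k (U x + x * V x - m * (B ^ 2 - 1) / (B - x) ^ 2) x := by
    intro x hx hxB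
    have hne : B - x ≠ 0 := by linarith
    have h1 := ((hasDerivAt_id x).mul (h.derU x hx)).sub
      (((((hasDerivAt_id x).const_mul B).sub_const 1).const_mul m).div
        ((hasDerivAt_id x).const_sub B) hne)
    rw [hk]
    refine hasDerivAt_of_eq h1 (fun _ => rfl) ?_
    simp only [id]
    field_simp
    ring
  have dK : ∀ x, 0 < x → x < B →
      HasDerivAt K (x * U x ^ 3 - 2 * m * (B ^ 2 - 1) * (B * x - 1) / (B - x) ^ 3) x := by
    intro x hx hxB
    have hne : B - x ≠ 0 := by linarith
    have h1 := (((hasDerivAt_id x).pow 2).sub_const 1).mul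
      (((h.derU x hx).add ((hasDerivAt_id x).mul (h.derV x hx))).sub
      ((hasDerivAt_const x (m * (B ^ 2 - 1))).div
        (((hasDerivAt_id x).const_sub B).pow 2) (pow_ne_zero 2 hne)))
    rw [hK]
    refine hasDerivAt_of_eq h1 (fun _ => rfl) ?_
    simp
    have ho := h.ode x hx
    have : x * U x ^ 3 = 2 * x * (U x + x * V x) + (x ^ 2 - 1) * (V x + (V x + x * A x)) := by
      linear_combination ho
    rw [this]
    field_simp
    ring
  have hkpos : ∀ x, 1 ≤ x → x < B → 0 < k x := by
    intro X hX1 hXB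
    have hkc : ContinuousOn k (Set.Icc 1 X) := fun x hx =>
      (dk x (by linarith [hx.1]) (by linarith [hx.2])).continuousAt.continuousWithinAt
    have hk1 : 0 < k 1 := by
      rw [hk]
      have : B - 1 ≠ 0 := by linarith
      have e : m * (B * 1 - 1) / (B - 1) = m := by field_simp
      simp only [e]
      linarith
    refine pos_of_propagates hkc hk1 (fun r hr hrX hpos => ?_) X ⟨hX1, le_rfl⟩
    have hKnn : ∀ x ∈ Set.Ioo 1 r, 0 ≤ K x := by
      intro x hx
      have hK1 : K 1 = 0 := by rw [hK]; simp
      rw [← hK1]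
      refine le_of_hasDerivAt_nonneg hx.1
        (fun y hy => (dK y (by linarith [hy.1]) (by
          linarith [hy.2, hx.2])).continuousAt.continuousWithinAt)
        (fun y hy => dK y (by linarith [hy.1]) (by linarith [hy.2, hx.2])) (fun y hy => ?_)
      have hy1 := hy.1
      have hyB : y < B := by linarith [hy.2, hx.2]
      have hp := hpos y hy1.le (by linarith [hy.2, hx.2])
      rw [hk] at hp
      simp only [sub_pos] at hp
      have hBy : 0 < B - y := by linarith
      have hBy1 : 0 < B * y - 1 := by nlinarith
      have hph : 0 < m * (B * y - 1) / (B - y) := by positivity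
      have hcube : (m * (B * y - 1) / (B - y)) ^ 3 ≤ (y * U y) ^ 3 :=
        pow_le_pow_left₀ hph.le hp.le 3
      -- the subsolution inequality
      have hsub : 2 * m * (B ^ 2 - 1) * (B * y - 1) / (B - y) ^ 3 * y ^ 2
          ≤ (m * (B * y - 1) / (B - y)) ^ 3 := by
        rw [div_pow, div_mul_eq_mul_div]
        refine div_le_div_of_nonneg_right ?_ (by positivity)
        have e : 2 * (B ^ 2 - 1) = m ^ 2 * (B - 1) ^ 2 := by
          linear_combination (-(B - 1)) * hBm
        have h2 : ((B - 1) * y) ^ 2 ≤ (B * y - 1) ^ 2 := by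
          apply pow_le_pow_left₀
          · have : 0 < B - 1 := by linarith
            positivity
          · nlinarith
        have h3 : m ^ 3 * (B * y - 1) * ((B - 1) * y) ^ 2
            ≤ m ^ 3 * (B * y - 1) * (B * y - 1) ^ 2 :=
          mul_le_mul_of_nonneg_left h2 (by positivity)
        calc 2 * m * (B ^ 2 - 1) * (B * y - 1) * y ^ 2
            = m ^ 3 * (B * y - 1) * ((B - 1) * y) ^ 2 := by
              linear_combination m * (B * y - 1) * y ^ 2 * e
          _ ≤ _ := h3
          _ = _ := by ring
      have hfin : 2 * m * (B ^ 2 - 1) * (B * y - 1) / (B - y) ^ 3 * y ^ 2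
          ≤ (y * U y ^ 3) * y ^ 2 := by
        calc _ ≤ _ := hsub
          _ ≤ _ := hcube
          _ = _ := by ring
      have := le_of_mul_le_mul_right hfin (by positivity)
      linarith
    have : k 1 ≤ k r := by
      refine le_of_hasDerivAt_nonneg hr (hkc.mono (Set.Icc_subset_Icc_right hrX))
        (fun y hy => dk y (by linarith [hy.1]) (by linarith [hy.2])) (fun y hy => ?_)
      have h1 := hKnn y hy
      rw [hK] at h1
      exact nonneg_of_mul_nonneg_right h1 (by nlinarith [hy.1])
    linarith
  -- let `ρ → B` in `ρU (B - ρ) ≥ m (Bρ - 1)`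
  have hlim : ContinuousWithinAt (fun x => x * U x * (B - x) - m * (B * x - 1)) (Set.Ico 1 B) B := by
    have := (h.derU B (by linarith)).continuousAt
    have h2 : ContinuousAt (fun x => x * U x * (B - x) - m * (B * x - 1)) B := by fun_prop
    exact h2.continuousWithinAt
  have hcl : B ∈ closure (Set.Ico 1 B) := by
    rw [closure_Ico hB1.ne]; exact ⟨hB1.le, le_rfl⟩
  have := ContinuousWithinAt.closure_le hcl continuousWithinAt_const hlim
    (fun x hx => show (0:ℝ) ≤ _ by
      have h1 := hkpos x hx.1 hx.2
      rw [hk] at h1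
      simp only [sub_pos] at h1
      rw [div_lt_iff₀ (by linarith [hx.2])] at h1
      linarith)
  have : 0 < m * (B * B - 1) := mul_pos hm0 (by nlinarith)
  simp only [sub_self, mul_zero] at *
  linarith

/-! ### Inside the light cone -/

/-- A solution that is positive on `[c,1]` and decreasing through `√2` at `c` has
`c² ≤ 1/3`, the square of the zero of the solution `3ρ - 1/ρ` of the equation linearized at `√2`.
The function `L` below is the Wronskian of `1 - 2/U²` with that solution, weighted by
`ρ²(1-ρ²)`. -/
lemma crossing_le {U V A : ℝ → ℝ} (h : IsProfile U V A) {c : ℝ} (hc0 : 0 < c) (hc1 : c < 1)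
    (hUc : U c = √2) (hVc : V c < 0) (hpos : ∀ x, c ≤ x → x ≤ 1 → 0 < U x) : c ^ 2 ≤ 1 / 3 := by
  by_contra! hc
  obtain ⟨L, hL⟩ : ∃ L : ℝ → ℝ, L = fun x => 4 * (x * (1 - x ^ 2) * (3 * x ^ 2 - 1)) * V x / U x ^ 3
      - (1 - 2 / U x ^ 2) * ((1 - x ^ 2) * (3 * x ^ 2 + 1)) := ⟨_, rfl⟩
  have dL : ∀ x, c ≤ x → x ≤ 1 →
      HasDerivAt (fun x => -L x) (12 * x * (1 - x ^ 2) * (3 * x ^ 2 - 1) * V x ^ 2 / U x ^ 4) x := by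
    intro x hx hx1
    have hx0 : 0 < x := by linarith
    have hne : U x ≠ 0 := (hpos x hx hx1).ne'
    have i := hasDerivAt_id x
    have h1 := (((((i.mul ((i.pow 2).const_sub 1)).mul
      (((i.pow 2).const_mul 3).sub_const 1)).const_mul 4).mul (h.derV x hx0)).div
      ((h.derU x hx0).pow 3) (pow_ne_zero 3 hne)).sub
      ((((hasDerivAt_const x (2:ℝ)).div ((h.derU x hx0).pow 2) (pow_ne_zero 2 hne)).const_sub 1).mul
      (((i.pow 2).const_sub 1).mul (((i.pow 2).const_mul 3).add_const 1)))
    rw [hL]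
    refine hasDerivAt_of_eq h1.neg (fun _ => rfl) ?_
    simp
    field_simp
    linear_combination (4 * (3 * x ^ 2 - 1) * U x) * h.ode x hx0
  have h1 : (fun x => -L x) c ≤ (fun x => -L x) 1 :=
    le_of_hasDerivAt_nonneg (g := fun x => -L x) hc1 (fun x hx => (dL x hx.1 hx.2).continuousAt.continuousWithinAt)
      (fun x hx => dL x hx.1.le hx.2.le) (fun x hx => by
        have a1 : 0 < x := by linarith [hx.1]
        have a2 : 0 ≤ 1 - x ^ 2 := by nlinarith [hx.2]
        have a3 : 0 ≤ 3 * x ^ 2 - 1 := by nlinarith [hx.1]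
        positivity)
  have hL1 : L 1 = 0 := by rw [hL]; simp
  have hLc : L c < 0 := by
    have e : L c = 4 * (c * (1 - c ^ 2) * (3 * c ^ 2 - 1)) * V c / √2 ^ 3 := by
      rw [hL]
      simp only [hUc]
      rw [Real.sq_sqrt (by norm_num)]
      norm_num
    rw [e]
    refine div_neg_of_neg_of_pos (mul_neg_of_pos_of_neg ?_ hVc) (by positivity)
    have a2 : 0 < 1 - c ^ 2 := by nlinarith
    have a3 : 0 < 3 * c ^ 2 - 1 := by linarith
    positivity
  simp only [hL1] at h1
  linarith

/-- Differential barrier: under `ρ²U² ≤ 2/3`, a solution decreasing through `√2` at `c` stays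
below the curve `U' = -ρ(1+3ρ²)(U³-2U)/2` inwards of `c`. -/
lemma barrier {U V A : ℝ → ℝ} (h : IsProfile U V A) {r c : ℝ} (hr : 0 ≤ r)
    (hUc : U c = √2) (hV : ∀ x, r < x → x ≤ c → V x < 0)
    (hU : ∀ x, r < x → x < c → √2 < U x)
    (hy : ∀ x, r < x → x ≤ c → x ^ 2 * U x ^ 2 ≤ 2 / 3) :
    ∀ x, r < x → x ≤ c → V x + x * (1 + 3 * x ^ 2) / 2 * (U x ^ 3 - 2 * U x) < 0 := by
  intro X hX hXc
  by_contra! hbad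
  obtain ⟨G, hG⟩ : ∃ G : ℝ → ℝ, G = fun x =>
    V x + x * (1 + 3 * x ^ 2) / 2 * (U x ^ 3 - 2 * U x) := ⟨_, rfl⟩
  have dG : ∀ x, 0 < x → HasDerivAt G (A x + ((1 + 9 * x ^ 2) / 2 * (U x ^ 3 - 2 * U x)
      + x * (1 + 3 * x ^ 2) / 2 * ((3 * U x ^ 2 - 2) * V x))) x := by
    intro x hx
    have i := hasDerivAt_id x
    have h1 := (h.derV x hx).add (((i.mul (((i.pow 2).const_mul 3).const_add 1)).div_const 2).mul
      (((h.derU x hx).pow 3).sub ((h.derU x hx).const_mul 2)))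
    rw [hG]
    refine hasDerivAt_of_eq h1 (fun _ => rfl) ?_
    simp
    ring
  have hs2 : √2 ^ 2 = 2 := Real.sq_sqrt (by norm_num)
  have hGc : G c < 0 := by
    have e : G c = V c := by
      rw [hG]
      simp only [hUc]
      linear_combination (c * (1 + 3 * c ^ 2) / 2 * √2) * hs2
    rw [e]
    exact hV c (by linarith) le_rfl
  obtain ⟨s, hs1, hsc, hs0, hneg⟩ := exists_last_zero (g := G) (a := X) (b := c)
    (fun x hx => (dG x (by linarith [hx.1])).continuousAt.continuousWithinAt) hGc
    ⟨X, ⟨le_rfl, hXc⟩, by rw [hG]; exact hbad⟩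
  have hs : 0 < s := by linarith
  have hUs := hU s (by linarith) hsc
  have hVs := hV s (by linarith) hsc.le
  have hys := hy s (by linarith) hsc.le
  have hU0 : 0 < U s := lt_of_le_of_lt (Real.sqrt_nonneg 2) hUs
  have hU2 : 2 < U s ^ 2 := by nlinarith [Real.sqrt_nonneg 2]
  have hq : s ^ 2 ≤ 1 / 3 := by nlinarith
  have hq0 : 0 < s ^ 2 := by positivity
  -- the barrier is crossed in the wrong direction
  have hpos : 0 < A s + ((1 + 9 * s ^ 2) / 2 * (U s ^ 3 - 2 * U s)
      + s * (1 + 3 * s ^ 2) / 2 * ((3 * U s ^ 2 - 2) * V s)) := by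
    have ho := h.ode s hs
    have hVe : V s = -(s * (1 + 3 * s ^ 2) / 2 * (U s ^ 3 - 2 * U s)) := by
      rw [hG] at hs0
      simp only at hs0
      linarith
    rw [hVe] at ho ⊢
    have hn : 0 < U s ^ 3 - 2 * U s := by nlinarith
    obtain ⟨q, hqd⟩ : ∃ q, q = s ^ 2 := ⟨_, rfl⟩
    obtain ⟨y, hyd⟩ : ∃ y, y = s ^ 2 * U s ^ 2 := ⟨_, rfl⟩
    rw [← hqd] at hq hq0
    rw [← hyd] at hys
    -- twice the value of `(1 - ρ²) G' / n` on the barrier is at least its value at `ρ²U² = 2/3`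
    have hpoly : 0 < (2 - 4 * q) * (1 + 3 * q) - 2 + (1 - q) * ((1 + 9 * q)
        - (1 + 3 * q) ^ 2 / 2 * (3 * y - 2 * q)) := by
      have h1 : (1 - q) * ((1 + 3 * q) ^ 2 / 2 * (3 * y - 2 * q))
          ≤ (1 - q) * ((1 + 3 * q) ^ 2 / 2 * (2 - 2 * q)) :=
        mul_le_mul_of_nonneg_left (mul_le_mul_of_nonneg_left (by linarith) (by positivity))
          (by linarith)
      have h2 : 0 < q * (6 - 19 * q + 12 * q ^ 2 - 9 * q ^ 3) := by
        apply mul_pos hq0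
        have : q ^ 3 ≤ q ^ 2 := by nlinarith [sq_nonneg q]
        nlinarith
      nlinarith
    have hid : 2 * s * (1 - s ^ 2) * (A s + ((1 + 9 * s ^ 2) / 2 * (U s ^ 3 - 2 * U s)
        + s * (1 + 3 * s ^ 2) / 2 * ((3 * U s ^ 2 - 2) *
          -(s * (1 + 3 * s ^ 2) / 2 * (U s ^ 3 - 2 * U s)))))
        = s * (U s ^ 3 - 2 * U s) * ((2 - 4 * q) * (1 + 3 * q) - 2 + (1 - q) * ((1 + 9 * q)
        - (1 + 3 * q) ^ 2 / 2 * (3 * y - 2 * q))) := by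
      rw [hqd, hyd]
      linear_combination 2 * ho
    have h3 : 0 < s * (U s ^ 3 - 2 * U s) * ((2 - 4 * q) * (1 + 3 * q) - 2 + (1 - q) *
        ((1 + 9 * q) - (1 + 3 * q) ^ 2 / 2 * (3 * y - 2 * q))) := mul_pos (mul_pos hs hn) hpoly
    rw [← hid] at h3
    exact pos_of_mul_pos_right h3 (by
      have : 0 ≤ 1 - s ^ 2 := by rw [← hqd]; linarith
      positivity)
  have hle' : A s + ((1 + 9 * s ^ 2) / 2 * (U s ^ 3 - 2 * U s)
      + s * (1 + 3 * s ^ 2) / 2 * ((3 * U s ^ 2 - 2) * V s)) ≤ 0 := by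
    have hd := (dG s hs).hasDerivWithinAt (s := Set.Ioi s)
    rw [hasDerivWithinAt_iff_tendsto_slope' (by simp)] at hd
    refine le_of_tendsto hd ?_
    filter_upwards [Ioo_mem_nhdsGT hsc] with x hx
    rw [slope_def_field, hs0, sub_zero]
    exact (div_neg_of_neg_of_pos (hneg x hx.1 hx.2.le) (sub_pos.2 hx.1)).le
  linarith

lemma no_regular_interior {U V A : ℝ → ℝ} (h : IsProfile U V A) (hb0 : 0 < U 1)
    (hb : U 1 < √2) : False := by
  have hs2 : √2 ^ 2 = 2 := Real.sq_sqrt (by norm_num)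
  have hs0 : 0 ≤ √2 := Real.sqrt_nonneg 2
  have hV1 : V 1 < 0 := by
    have := h.ode 1 one_pos
    nlinarith [mul_pos hb0 (show 0 < 2 - U 1 ^ 2 by nlinarith)]
  have cU : ∀ a b, 0 ≤ a → ContinuousOn U (Set.Icc a b) := fun a b ha =>
    h.contU.mono (fun x hx => le_trans ha hx.1)
  have cV : ∀ a b, 0 ≤ a → ContinuousOn V (Set.Icc a b) := fun a b ha =>
    h.contV.mono (fun x hx => le_trans ha hx.1)
  -- `(r, 1]` is the largest interval on which `U' < 0`
  obtain ⟨r, hr0, hr1, hVr, hneg⟩ : ∃ r, 0 ≤ r ∧ r < 1 ∧ (r = 0 ∨ V r = 0) ∧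
      ∀ x, r < x → x ≤ 1 → V x < 0 := by
    by_cases hex : ∃ x ∈ Set.Icc (0:ℝ) 1, 0 ≤ V x
    · obtain ⟨r, a1, a2, a3, a4⟩ := exists_last_zero (cV 0 1 le_rfl) hV1 hex
      exact ⟨r, a1, a2, Or.inr a3, a4⟩
    · push Not at hex
      exact ⟨0, le_rfl, one_pos, Or.inl rfl, fun x hx hx1 => hex x ⟨hx.le, hx1⟩⟩
  have anti : ∀ x y, r ≤ x → x < y → y ≤ 1 → U y < U x := by
    intro x y hx hxy hy
    have := lt_of_hasDerivAt_pos (g := fun t => -U t) hxy (cU x y (by linarith)).neg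
      (fun t ht => (h.derU t (by linarith [ht.1])).neg)
      (fun t ht => by linarith [hneg t (by linarith [ht.1]) (by linarith [ht.2])])
    linarith
  have Upos : ∀ x, r ≤ x → x ≤ 1 → 0 < U x := by
    intro x hx hx1
    rcases lt_or_eq_of_le hx1 with h1 | h1
    · linarith [anti x 1 hx h1 le_rfl]
    · rw [h1]; exact hb0
  have dP : ∀ x, 0 < x →
      HasDerivAt (fun x => x ^ 2 * (1 - x ^ 2) * V x) (x ^ 2 * (2 * U x - U x ^ 3)) x := by
    intro x hx
    have i := hasDerivAt_id x
    have h1 := ((i.pow 2).mul ((i.pow 2).const_sub 1)).mul (h.derV x hx)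
    refine hasDerivAt_of_eq h1 (fun _ => rfl) ?_
    simp
    linear_combination (-x) * h.ode x hx
  have cP : ∀ a b, 0 ≤ a → ContinuousOn (fun x => x ^ 2 * (1 - x ^ 2) * V x) (Set.Icc a b) := by
    intro a b ha
    have := cV a b ha
    fun_prop
  have hPr : r ^ 2 * (1 - r ^ 2) * V r = 0 := by
    rcases hVr with h1 | h1 <;> rw [h1] <;> simp
  have hUr : √2 < U r := by
    by_contra! hle
    have := lt_of_hasDerivAt_pos hr1 (cP r 1 hr0) (fun x hx => dP x (by linarith [hx.1]))
      (fun x hx => by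
        have a0 : 0 < x := by linarith [hx.1]
        have a1 := anti r x le_rfl hx.1 hx.2.le
        have a2 := Upos x hx.1.le hx.2.le
        have : 0 < U x * (2 - U x ^ 2) := mul_pos a2 (by nlinarith)
        have : 0 < 2 * U x - U x ^ 3 := by linarith
        positivity)
    simp only [hPr] at this
    norm_num at this
  obtain ⟨c, hcI, hUc⟩ : √2 ∈ U '' Set.Icc r 1 :=
    intermediate_value_Icc' hr1.le (cU r 1 hr0) ⟨hb.le, hUr.le⟩
  have hrc : r < c := by
    rcases lt_or_eq_of_le hcI.1 with h1 | h1
    · exact h1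
    · rw [h1] at hUr; linarith
  have hc1 : c < 1 := by
    rcases lt_or_eq_of_le hcI.2 with h1 | h1
    · exact h1
    · rw [h1] at hUc; linarith
  have hc0 : 0 < c := by linarith
  have hcq : c ^ 2 ≤ 1 / 3 := crossing_le h hc0 hc1 hUc (hneg c hrc hc1.le)
    (fun x hx hx1 => Upos x (by linarith) hx1)
  -- `f = ρU` is increasing, because `(1 - ρ²) f'` decreases to `0` at `ρ = 1`
  have hf' : ∀ x, r < x → x < 1 → 0 < U x + x * V x := by
    intro x hx hx1
    have d : ∀ t, 0 < t → HasDerivAt (fun t => -((1 - t ^ 2) * (U t + t * V t))) (t * U t ^ 3) t := by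
      intro t ht
      have i := hasDerivAt_id t
      have h1 := (((i.pow 2).const_sub 1).mul ((h.derU t ht).add (i.mul (h.derV t ht)))).neg
      refine hasDerivAt_of_eq h1 (fun _ => rfl) ?_
      simp
      linear_combination h.ode t ht
    have h1 := lt_of_hasDerivAt_pos hx1
      (fun t ht => (d t (by linarith [ht.1])).continuousAt.continuousWithinAt)
      (fun t ht => d t (by linarith [ht.1])) (fun t ht => by
        have a0 : 0 < t := by linarith [ht.1]
        have a2 := Upos t (by linarith [ht.1]) ht.2.le
        positivity)
    norm_num at h1
    exact pos_of_mul_pos_right h1 (by nlinarith)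
  have hy : ∀ x, r < x → x ≤ c → x ^ 2 * U x ^ 2 ≤ 2 / 3 := by
    intro x hx hxc
    have hx0 : 0 < x := by linarith
    have hle : x * U x ≤ c * U c := by
      rcases lt_or_eq_of_le hxc with h1 | h1
      · exact le_of_hasDerivAt_nonneg (g := fun t => t * U t)
          (g' := fun t => U t + t * V t) h1
          (continuousOn_id.mul (cU x c hx0.le))
          (fun t ht => by
            refine hasDerivAt_of_eq ((hasDerivAt_id t).mul (h.derU t (by linarith [ht.1])))
              (fun _ => rfl) ?_
            simp)
          (fun t ht => (hf' t (by linarith [ht.1]) (by linarith [ht.2])).le)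
      · rw [h1]
    have := pow_le_pow_left₀ (mul_pos hx0 (Upos x hx.le (by linarith))).le hle 2
    rw [hUc, mul_pow, mul_pow, hs2] at this
    linarith
  have hbar := barrier h hr0 hUc (fun x hx hxc => hneg x hx (by linarith))
    (fun x hx hxc => by rw [← hUc]; exact anti x c hx.le hxc hc1.le) hy
  have hn : 0 < U r ^ 3 - 2 * U r := by
    have : 0 < U r * (U r ^ 2 - 2) := mul_pos (by linarith) (by nlinarith)
    linarith
  have hclr : r ∈ closure (Set.Ioc r c) := by
    rw [closure_Ioc hrc.ne]; exact ⟨le_rfl, hrc.le⟩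
  have hsub : Set.Ioc r c ⊆ Set.Ici 0 := fun x hx => by
    have := hx.1
    simp only [Set.mem_Ici]; linarith
  have cUr : ContinuousWithinAt U (Set.Ioc r c) r := (h.contU r hr0).mono hsub
  have cVr : ContinuousWithinAt V (Set.Ioc r c) r := (h.contV r hr0).mono hsub
  rcases eq_or_lt_of_le hr0 with hz | hrpos
  · -- regularity at the origin: `ρ²(1-ρ²)U' ≥ -n(U(0)) ρ³/3`
    subst hz
    have key : ∀ x ∈ Set.Ioc 0 c, (1 - x ^ 2) * (1 + 3 * x ^ 2) / 2 * (U x ^ 3 - 2 * U x)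
        ≤ (U 0 ^ 3 - 2 * U 0) / 3 := by
      intro x hx
      have hx0 : 0 < x := hx.1
      have hx1 : x < 1 := by linarith [hx.2]
      have h1 := le_of_hasDerivAt_nonneg
        (g := fun x => x ^ 2 * (1 - x ^ 2) * V x + (U 0 ^ 3 - 2 * U 0) * (x ^ 3 / 3))
        (g' := fun x => x ^ 2 * (2 * U x - U x ^ 3) + (U 0 ^ 3 - 2 * U 0) * x ^ 2) hx0
        ((cP 0 x le_rfl).add (by fun_prop))
        (fun t ht => by
          refine hasDerivAt_of_eq ((dP t ht.1).add
            ((((hasDerivAt_id t).pow 3).div_const 3).const_mul (U 0 ^ 3 - 2 * U 0)))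
            (fun _ => rfl) ?_
          simp)
        (fun t ht => by
          have a1 : U t ≤ U 0 := (anti 0 t le_rfl ht.1 (by linarith [ht.2])).le
          have a2 : √2 ≤ U t := by
            rw [← hUc]
            exact (anti t c ht.1.le (by linarith [ht.2, hx.2]) hc1.le).le
          have a3 : 0 ≤ (U 0 - U t) * (U 0 ^ 2 + U 0 * U t + U t ^ 2 - 2) :=
            mul_nonneg (by linarith) (by nlinarith)
          have a4 : 0 ≤ t ^ 2 * ((U 0 - U t) * (U 0 ^ 2 + U 0 * U t + U t ^ 2 - 2)) :=
            mul_nonneg (sq_nonneg t) a3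
          linarith)
      have h2 := hbar x hx0 hx.2
      have h3 : 0 < x ^ 2 * (1 - x ^ 2) := mul_pos (by positivity) (by nlinarith)
      have h4 := mul_neg_of_pos_of_neg h3 h2
      norm_num at h1
      have h5 : x ^ 3 * ((1 - x ^ 2) * (1 + 3 * x ^ 2) / 2 * (U x ^ 3 - 2 * U x))
        ≤ x ^ 3 * ((U 0 ^ 3 - 2 * U 0) / 3) := by linarith
      exact le_of_mul_le_mul_left h5 (by positivity)
    have hcw : ContinuousWithinAt (fun x => (1 - x ^ 2) * (1 + 3 * x ^ 2) / 2 *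
        (U x ^ 3 - 2 * U x)) (Set.Ioc 0 c) 0 := by fun_prop
    have := ContinuousWithinAt.closure_le hclr hcw continuousWithinAt_const key
    norm_num at this
    linarith
  · have hV0 : V r = 0 := by
      rcases hVr with h1 | h1
      · linarith
      · exact h1
    have hcw : ContinuousWithinAt (fun x => V x + x * (1 + 3 * x ^ 2) / 2 *
        (U x ^ 3 - 2 * U x)) (Set.Ioc r c) r := by fun_prop
    have := ContinuousWithinAt.closure_le hclr hcw continuousWithinAt_const
      (fun x hx => (hbar x hx.1 hx.2).le)
    rw [hV0, zero_add] at this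
    have : 0 < r * (1 + 3 * r ^ 2) / 2 * (U r ^ 3 - 2 * U r) := by positivity
    linarith

lemma profile_pos_eq {U V A : ℝ → ℝ} (h : IsProfile U V A) (hb : 0 < U 1) : U 1 = √2 := by
  rcases lt_trichotomy (U 1) (√2) with h1 | h1 | h1
  · exact (no_regular_interior h hb h1).elim
  · exact h1
  · exact (no_global_exterior h h1).elim

/-- A `C²` solution of the profile equation on all of `[0,∞)` must have
`U(1) ∈ {-√2, 0, √2}`: nonconstant regular profiles are singular outside the
past light cone and cannot be globally smooth. -/
theorem cubic_wave_global_profile_trichotomy (U : ℝ → ℝ)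
    (hU : ContDiffOn ℝ 2 U (Set.Ici 0))
    (heq : ∀ ρ : ℝ, 0 < ρ →
      (1 - ρ ^ 2) * deriv (deriv U) ρ + (2 / ρ - 4 * ρ) * deriv U ρ
        - 2 * U ρ + (U ρ) ^ 3 = 0) :
    U 1 = -Real.sqrt 2 ∨ U 1 = 0 ∨ U 1 = Real.sqrt 2 := by
  have h := isProfile_of_contDiffOn hU heq
  rcases lt_trichotomy (U 1) 0 with h1 | h1 | h1
  · left
    have := profile_pos_eq h.neg (by linarith)
    linarith
  · exact Or.inr (Or.inl h1)
  · exact Or.inr (Or.inr (profile_pos_eq h h1))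
end

section
/- Let I ⊂ (0,∞) be an open interval and let U : I → ℝ be C² and solve (1−ρ²)U''(ρ) + (2/ρ − 4ρ)U'(ρ) − 2U(ρ) + U(ρ)³ = 0 on I. Then the function H(ρ) = (1/2)(1−ρ²)U'(ρ)² − U(ρ)² + (1/4)U(ρ)⁴ is differentiable on I with H'(ρ) = (3ρ − 2/ρ)·U'(ρ)². In particular H is nonincreasing on I ∩ (0, √(2/3)] and nondecreasing on I ∩ [√(2/3), ∞). -/
/-!
Multiplying the equation by `U'` gives
`(1-ρ²)U'U'' - 2UU' + U³U' = (4ρ - 2/ρ)U'²`, while differentiating `H` produces the left-hand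
side together with `-ρU'²`; this is the formula for `H'`. For `ρ > 0` the factor
`3ρ - 2/ρ = (3ρ² - 2)/ρ` has the sign of `ρ² - 2/3`, and the monotonicity on the two convex
pieces follows from the sign of the derivative.
-/

/-- Along a `C²` solution of the profile equation on an open interval `I ⊆ (0,∞)`,
the function `H = (1/2)(1-ρ²)U'² - U² + (1/4)U⁴` satisfies `H' = (3ρ - 2/ρ)U'²`;
hence `H` is nonincreasing on `I ∩ (0, √(2/3)]` and nondecreasing on `I ∩ [√(2/3), ∞)`. -/
theorem cubic_wave_H_monotone (a b : ℝ) (ha : 0 ≤ a) (U : ℝ → ℝ)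
    (hU : ContDiffOn ℝ 2 U (Set.Ioo a b))
    (heq : ∀ ρ ∈ Set.Ioo a b,
      (1 - ρ ^ 2) * deriv (deriv U) ρ + (2 / ρ - 4 * ρ) * deriv U ρ
        - 2 * U ρ + (U ρ) ^ 3 = 0) :
    (∀ ρ ∈ Set.Ioo a b,
      HasDerivAt
        (fun y => 1 / 2 * (1 - y ^ 2) * (deriv U y) ^ 2 - (U y) ^ 2 + 1 / 4 * (U y) ^ 4)
        ((3 * ρ - 2 / ρ) * (deriv U ρ) ^ 2) ρ) ∧
    AntitoneOn
      (fun y => 1 / 2 * (1 - y ^ 2) * (deriv U y) ^ 2 - (U y) ^ 2 + 1 / 4 * (U y) ^ 4)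
      (Set.Ioo a b ∩ Set.Ioc 0 (Real.sqrt (2 / 3))) ∧
    MonotoneOn
      (fun y => 1 / 2 * (1 - y ^ 2) * (deriv U y) ^ 2 - (U y) ^ 2 + 1 / 4 * (U y) ^ 4)
      (Set.Ioo a b ∩ Set.Ici (Real.sqrt (2 / 3))) := by
  have key : ∀ ρ ∈ Set.Ioo a b,
      HasDerivAt
        (fun y => 1 / 2 * (1 - y ^ 2) * (deriv U y) ^ 2 - (U y) ^ 2 + 1 / 4 * (U y) ^ 4)
        ((3 * ρ - 2 / ρ) * (deriv U ρ) ^ 2) ρ := by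
    intro ρ hρ
    have hn : Set.Ioo a b ∈ nhds ρ := isOpen_Ioo.mem_nhds hρ
    have h1 : HasDerivAt U (deriv U ρ) ρ :=
      ((hU.differentiableOn (by norm_num)).differentiableAt hn).hasDerivAt
    have hU' : ContDiffOn ℝ 1 (deriv U) (Set.Ioo a b) :=
      hU.deriv_of_isOpen isOpen_Ioo (by norm_num)
    have h2 : HasDerivAt (deriv U) (deriv (deriv U) ρ) ρ :=
      ((hU'.differentiableOn (by norm_num)).differentiableAt hn).hasDerivAt
    have h3 : HasDerivAt (fun y : ℝ => 1 / 2 * (1 - y ^ 2)) (1 / 2 * (-(2 * ρ))) ρ := by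
      simpa using ((hasDerivAt_pow 2 ρ).const_sub 1).const_mul (1 / 2 : ℝ)
    have h := ((h3.fun_mul (h2.fun_pow 2)).fun_sub (h1.fun_pow 2)).fun_add
      ((h1.fun_pow 4).const_mul (1 / 4 : ℝ))
    refine h.congr_deriv ?_
    push_cast
    linear_combination deriv U ρ * heq ρ hρ
  have hcont : ContinuousOn
      (fun y => 1 / 2 * (1 - y ^ 2) * (deriv U y) ^ 2 - (U y) ^ 2 + 1 / 4 * (U y) ^ 4)
      (Set.Ioo a b) := fun ρ hρ => (key ρ hρ).continuousAt.continuousWithinAt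
  have hfac : ∀ ρ : ℝ, 0 < ρ → 3 * ρ - 2 / ρ = (3 * ρ ^ 2 - 2) / ρ := by
    intro ρ hρ
    field_simp
  refine ⟨key, ?_, ?_⟩
  · refine antitoneOn_of_hasDerivWithinAt_nonpos
      (f' := fun ρ => (3 * ρ - 2 / ρ) * (deriv U ρ) ^ 2)
      ((convex_Ioo a b).inter (convex_Ioc _ _)) (hcont.mono Set.inter_subset_left)
      (fun ρ hρ => (key ρ (interior_subset hρ).1).hasDerivWithinAt) ?_
    intro ρ hρ
    obtain ⟨-, hpos, hle⟩ := interior_subset hρ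
    have hsq : ρ ^ 2 ≤ 2 / 3 := (Real.le_sqrt hpos.le (by norm_num)).1 hle
    refine mul_nonpos_of_nonpos_of_nonneg ?_ (sq_nonneg _)
    rw [hfac ρ hpos]
    exact div_nonpos_of_nonpos_of_nonneg (by linarith) hpos.le
  · refine monotoneOn_of_hasDerivWithinAt_nonneg
      (f' := fun ρ => (3 * ρ - 2 / ρ) * (deriv U ρ) ^ 2)
      ((convex_Ioo a b).inter (convex_Ici _)) (hcont.mono Set.inter_subset_left)
      (fun ρ hρ => (key ρ (interior_subset hρ).1).hasDerivWithinAt) ?_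
    intro ρ hρ
    obtain ⟨hI, hge⟩ := interior_subset hρ
    have hpos : 0 < ρ := ha.trans_lt hI.1
    have hsq : 2 / 3 ≤ ρ ^ 2 := (Real.sqrt_le_left hpos.le).1 hge
    refine mul_nonneg ?_ (sq_nonneg _)
    rw [hfac ρ hpos]
    exact div_nonneg (by linarith) hpos.le
end
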